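/- arXiv:2407.21474 — 4 statements merged into one kernel-verified Lean document; each statement's English description precedes it below -/
import Mathlib

section
/- (Termwise differentiation, Proposition 3.8, derivative form) Let (r_l) be real numbers and R > 0 such that ∑_{l=0}^∞ |r_l| ρ^l converges for every real ρ with 0 ≤ ρ < R. Then for every p ∈ ℍ with ‖p‖ < R, the real-variable function t ↦ ∑_{l=0}^∞ r_l • (p + t•1)^l has derivative at t = 0 equal to ∑_{l=1}^∞ (l · r_l) • p^{l-1}. -/
/-!
The function `t ↦ r l • (p + t • 1) ^ l` has derivative `(l * r l) • (p + t • 1) ^ (l - 1)`, since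
`p + t • 1` commutes with its own derivative `1`. On the interval `|t| < ρ - ‖p‖`, with
`‖p‖ < ρ < R`, these derivatives are bounded in norm by `l * |r l| * ρ ^ (l - 1)`. This majorant is
summable: for `δ > 0` with `ρ + δ < R`, the binomial expansion gives
`l * ρ ^ (l - 1) * δ ≤ (ρ + δ) ^ l`. So the series may be differentiated term by term.
-/

/-- The linear-in-`δ` term of the binomial expansion of `(ρ + δ) ^ n` is at most the whole. -/
lemma mul_pow_pred_mul_le_add_pow {ρ δ : ℝ} (hρ : 0 ≤ ρ) (hδ : 0 ≤ δ) (n : ℕ) :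
    (n : ℝ) * ρ ^ (n - 1) * δ ≤ (ρ + δ) ^ n := by
  induction n with
  | zero => simp
  | succ n ih =>
    have h1 : ((n + 1 : ℕ) : ℝ) * ρ ^ n * δ = (n : ℝ) * ρ ^ (n - 1) * δ * ρ + ρ ^ n * δ := by
      cases n with
      | zero => simp
      | succ m => rw [Nat.add_sub_cancel]; push_cast; ring
    have h2 : ρ ^ n ≤ (ρ + δ) ^ n := pow_le_pow_left₀ hρ (by linarith) n
    rw [Nat.add_sub_cancel, h1, pow_succ, mul_add]
    exact add_le_add (mul_le_mul_of_nonneg_right ih hρ) (mul_le_mul_of_nonneg_right h2 hδ)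

lemma hasDerivAt_quaternion_add_smul_one_pow (p : Quaternion ℝ) (n : ℕ) (t : ℝ) :
    HasDerivAt (fun t : ℝ => (p + t • (1 : Quaternion ℝ)) ^ n)
      ((n : ℝ) • (p + t • (1 : Quaternion ℝ)) ^ (n - 1)) t := by
  have hlin : HasDerivAt (fun t : ℝ => p + t • (1 : Quaternion ℝ)) 1 t := by
    simpa using ((hasDerivAt_id t).smul_const (1 : Quaternion ℝ)).const_add p
  induction n with
  | zero => simpa using hasDerivAt_const t (1 : Quaternion ℝ)
  | succ n ih =>
    have h := ih.mul hlin
    have hfun : (fun t : ℝ => (p + t • (1 : Quaternion ℝ)) ^ (n + 1)) =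
        (fun t : ℝ => (p + t • (1 : Quaternion ℝ)) ^ n) * fun t => p + t • 1 := by
      funext s
      exact pow_succ _ _
    rw [hfun]
    refine h.congr_deriv ?_
    cases n with
    | zero => simp
    | succ m =>
      simp only [Nat.add_sub_cancel, smul_mul_assoc, ← pow_succ, mul_one]
      push_cast
      simp only [add_smul, one_smul]

/-- (Termwise differentiation, Proposition 3.8, derivative form) If `∑ |r l| * ρ ^ l` converges
for every `0 ≤ ρ < R`, then for every quaternion `p` with `‖p‖ < R` the real-variable function
`t ↦ ∑' l, r l • (p + t • 1) ^ l` has derivative at `t = 0` equal to the termwise-differentiated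
series `∑_{l=1}^∞ (l * r l) • p ^ (l - 1)` (the `l = 0` term vanishes since its coefficient
is `0`). -/
theorem quaternion_power_series_termwise_deriv (r : ℕ → ℝ) (R : ℝ) (hR : 0 < R)
    (hconv : ∀ ρ : ℝ, 0 ≤ ρ → ρ < R → Summable (fun l => |r l| * ρ ^ l))
    (p : Quaternion ℝ) (hp : ‖p‖ < R) :
    HasDerivAt (fun t : ℝ => ∑' l : ℕ, r l • (p + t • (1 : Quaternion ℝ)) ^ l)
      (∑' l : ℕ, ((l : ℝ) * r l) • p ^ (l - 1)) 0 := by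
  obtain ⟨ρ, hpρ, hρR⟩ := exists_between hp
  obtain ⟨σ, hρσ, hσR⟩ := exists_between hρR
  have hρ0 : 0 ≤ ρ := (norm_nonneg p).trans hpρ.le
  have hδ : 0 < σ - ρ := sub_pos.2 hρσ
  have hu : Summable fun l : ℕ => (l : ℝ) * |r l| * ρ ^ (l - 1) := by
    refine Summable.of_nonneg_of_le (fun l => by positivity) (fun l => ?_)
      ((hconv σ (hρ0.trans hρσ.le) hσR).div_const (σ - ρ))
    rw [le_div_iff₀ hδ]
    have h := mul_le_mul_of_nonneg_left (mul_pow_pred_mul_le_add_pow hρ0 hδ.le l)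
      (abs_nonneg (r l))
    rw [add_sub_cancel] at h
    linarith
  have hmem : (0 : ℝ) ∈ Metric.ball (0 : ℝ) (ρ - ‖p‖) :=
    Metric.mem_ball_self (sub_pos.2 hpρ)
  have hsum : Summable fun l : ℕ => r l • (p + (0 : ℝ) • (1 : Quaternion ℝ)) ^ l := by
    refine Summable.of_norm_bounded (hconv ‖p‖ (norm_nonneg p) hp) fun l => ?_
    simp [norm_smul]
  have key := hasDerivAt_tsum_of_isPreconnected
    (g := fun (l : ℕ) (t : ℝ) => r l • (p + t • (1 : Quaternion ℝ)) ^ l)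
    (g' := fun (l : ℕ) (t : ℝ) => ((l : ℝ) * r l) • (p + t • (1 : Quaternion ℝ)) ^ (l - 1))
    hu Metric.isOpen_ball (convex_ball (0 : ℝ) (ρ - ‖p‖)).isPreconnected
    (fun l t _ =>
      ((hasDerivAt_quaternion_add_smul_one_pow p l t).fun_const_smul (r l)).congr_deriv
        (by rw [smul_smul, mul_comm]))
    (fun l t ht => by
      have ht' : |t| < ρ - ‖p‖ := by simpa using ht
      have hn : ‖p + t • (1 : Quaternion ℝ)‖ ≤ ρ := by
        have h := norm_add_le p (t • (1 : Quaternion ℝ))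
        rw [norm_smul, norm_one, mul_one, Real.norm_eq_abs] at h
        linarith
      rw [norm_smul, norm_pow, norm_mul, Real.norm_natCast, Real.norm_eq_abs]
      gcongr)
    hmem hsum hmem
  simpa using key
end

section
/- (C↔H value correspondence for power series, instance of Theorem 1.2) Let (r_l) be real numbers and p ∈ ℍ with im p ≠ 0. Write V = ‖im p‖, ω = (1/V) • im p (so ω² = -1 and ω commutes with p), and let ξ = re(p) + V·i ∈ ℂ. If ∑_{l=0}^∞ |r_l| ‖p‖^l converges, then ∑_{l=0}^∞ r_l • p^l = Re(∑_{l=0}^∞ r_l ξ^l) • 1 + Im(∑_{l=0}^∞ r_l ξ^l) • ω; that is, the quaternionic sum is obtained from the complex sum by replacing the complex imaginary unit i by ω. -/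
/-!
Since `ω * ω = -1`, there is a unique `ℝ`-algebra homomorphism `φ : ℂ → ℍ` with `φ I = ω`
(`Complex.liftAux`), namely `φ z = z.re + z.im • ω`, and `φ ξ = p` because `V • ω = p.im`.
Hence `φ (r l * ξ ^ l) = r l • p ^ l`. As `‖ξ‖ = ‖p‖`, the hypothesis says that the complex series
converges absolutely; being `ℝ`-linear on a finite-dimensional space, `φ` is continuous and so
commutes with the sum.
-/

/-- The normalized imaginary part of a non-real quaternion is a square root of `-1`. -/
theorem normalized_im_mul_self {p : Quaternion ℝ} (him : p.im ≠ 0) :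
    (‖p.im‖⁻¹ • p.im) * (‖p.im‖⁻¹ • p.im) = -1 := by
  have hV : ‖p.im‖ ≠ 0 := norm_ne_zero_iff.mpr him
  have hsq : p.im * p.im = (-(‖p.im‖ * ‖p.im‖)) • (1 : Quaternion ℝ) := by
    rw [← pow_two, Quaternion.im_sq, Quaternion.normSq_eq_norm_mul_self, neg_smul,
      ← Algebra.algebraMap_eq_smul_one]
    rfl
  rw [smul_mul_smul_comm, hsq, smul_smul]
  have h1 : ‖p.im‖⁻¹ * ‖p.im‖⁻¹ * -(‖p.im‖ * ‖p.im‖) = -1 := by field_simp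
  rw [h1, neg_one_smul]

theorem norm_re_add_norm_im_mul_I (p : Quaternion ℝ) :
    ‖(p.re : ℂ) + (‖p.im‖ : ℂ) * Complex.I‖ = ‖p‖ := by
  rw [← sq_eq_sq₀ (norm_nonneg _) (norm_nonneg _), ← Complex.normSq_eq_norm_sq,
    Complex.normSq_add_mul_I, sq ‖p‖, sq ‖p.im‖, ← Quaternion.normSq_eq_norm_mul_self,
    ← Quaternion.normSq_eq_norm_mul_self, Quaternion.normSq_def', Quaternion.normSq_def']
  simp
  ring

/-- (C↔H value correspondence for power series, instance of Theorem 1.2) Let `p` be a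
quaternion with nonzero imaginary part, `V = ‖im p‖`, `ω = V⁻¹ • im p` (so `ω ^ 2 = -1` and
`ω` commutes with `p`), and let `ξ = re p + V * I ∈ ℂ`.  If `∑ |r l| * ‖p‖ ^ l` converges,
then the quaternionic sum `∑' l, r l • p ^ l` is obtained from the complex sum
`∑' l, r l * ξ ^ l` by replacing the complex imaginary unit by `ω`. -/
theorem quaternion_series_from_complex_series (r : ℕ → ℝ) (p : Quaternion ℝ)
    (him : p.im ≠ 0) (V : ℝ) (hV : V = ‖p.im‖) (ω : Quaternion ℝ) (hω : ω = V⁻¹ • p.im)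
    (ξ : ℂ) (hξ : ξ = (p.re : ℂ) + (V : ℂ) * Complex.I)
    (hsum : Summable fun l : ℕ => |r l| * ‖p‖ ^ l) :
    (∑' l : ℕ, r l • p ^ l)
      = (∑' l : ℕ, (r l : ℂ) * ξ ^ l).re • (1 : Quaternion ℝ)
        + (∑' l : ℕ, (r l : ℂ) * ξ ^ l).im • ω := by
  subst hV hω hξ
  have hV : ‖p.im‖ ≠ 0 := norm_ne_zero_iff.mpr him
  let φ : ℂ →ₐ[ℝ] Quaternion ℝ := Complex.liftAux _ (normalized_im_mul_self him)
  have hφ (z : ℂ) :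
      φ z = z.re • (1 : Quaternion ℝ) + z.im • (‖p.im‖⁻¹ • p.im) := by
    rw [Complex.liftAux_apply, Algebra.algebraMap_eq_smul_one]
  have hφξ : φ ((p.re : ℂ) + (‖p.im‖ : ℂ) * Complex.I) = p := by
    rw [hφ, smul_smul]
    have hre : ((p.re : ℂ) + (‖p.im‖ : ℂ) * Complex.I).re = p.re := by simp
    have him' : ((p.re : ℂ) + (‖p.im‖ : ℂ) * Complex.I).im = ‖p.im‖ := by simp
    rw [hre, him', mul_inv_cancel₀ hV, one_smul, ← Algebra.algebraMap_eq_smul_one]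
    exact p.re_add_im
  have hs : Summable fun l : ℕ =>
      (r l : ℂ) * ((p.re : ℂ) + (‖p.im‖ : ℂ) * Complex.I) ^ l := by
    refine Summable.of_norm ?_
    simpa only [norm_mul, norm_pow, norm_re_add_norm_im_mul_I, Complex.norm_real,
      Real.norm_eq_abs] using hsum
  have hcont : Continuous φ := φ.toLinearMap.continuous_of_finiteDimensional
  rw [← hφ, hs.map_tsum φ hcont]
  refine tsum_congr fun l => ?_
  rw [← Complex.real_smul, map_smul, map_pow, hφξ]
end

section
/- (Derivative of the quaternionic sine, Eq. (43)) For every p ∈ ℍ, the real-variable function t ↦ ∑_{l=0}^∞ ((-1)^l/(2l+1)!) • (p + t•1)^{2l+1} has derivative at t = 0 equal to ∑_{l=0}^∞ ((-1)^l/(2l)!) • p^{2l}; that is, (sin p)' = cos p in the sense of the full quaternionic derivative taken along the real direction. -/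
/-!
The series is differentiated term by term. Since `1` is central, the powers of `p + t • 1` obey
the commutative power rule in the real variable `t` (`hasDerivAt_shift_pow`), so the `l`-th sine
term differentiates to the `l`-th cosine term at `p + t • 1`. For `|t| < 1` that term is bounded
by `(‖p‖ + 1) ^ (2 * l) / (2 * l)!`, which is summable as the even part of the exponential series;
this uniform bound justifies exchanging sum and derivative.
-/

/-- The power rule along the real direction; the real shift commutes with `p`. -/
theorem hasDerivAt_shift_pow (p : Quaternion ℝ) (n : ℕ) (t : ℝ) :
    HasDerivAt (fun s : ℝ => (p + s • (1 : Quaternion ℝ)) ^ (n + 1))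
      (((n : ℝ) + 1) • (p + t • (1 : Quaternion ℝ)) ^ n) t := by
  have h1 : HasDerivAt (fun s : ℝ => p + s • (1 : Quaternion ℝ)) 1 t := by
    simpa using ((hasDerivAt_id t).smul_const (1 : Quaternion ℝ)).const_add p
  induction n with
  | zero => simpa using h1
  | succ n ih =>
    have h := ih.mul h1
    refine (h.congr_deriv ?_).congr_of_eventuallyEq (Filter.Eventually.of_forall fun s => ?_)
    · rw [smul_mul_assoc, ← pow_succ, mul_one]
      push_cast
      module
    · exact pow_succ _ _

theorem norm_cos_coeff_smul (l : ℕ) (q : Quaternion ℝ) :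
    ‖((-1 : ℝ) ^ l / ((2 * l).factorial : ℝ)) • q ^ (2 * l)‖
      = ‖q‖ ^ (2 * l) / ((2 * l).factorial : ℝ) := by
  rw [norm_smul, norm_pow, norm_div, norm_pow, norm_neg, norm_one, one_pow, Real.norm_natCast]
  ring

theorem quaternion_sin_deriv (p : Quaternion ℝ) :
    HasDerivAt
      (fun t : ℝ => ∑' l : ℕ,
        ((-1 : ℝ) ^ l / ((2 * l + 1).factorial : ℝ)) • (p + t • (1 : Quaternion ℝ)) ^ (2 * l + 1))
      (∑' l : ℕ, ((-1 : ℝ) ^ l / ((2 * l).factorial : ℝ)) • p ^ (2 * l)) 0 := by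
  have hu : Summable fun l : ℕ => (‖p‖ + 1) ^ (2 * l) / ((2 * l).factorial : ℝ) :=
    (Real.summable_pow_div_factorial (‖p‖ + 1)).comp_injective
      (i := fun l : ℕ => 2 * l) fun a b h => by simpa using h
  have hs : Summable fun l : ℕ => ((-1 : ℝ) ^ l / ((2 * l + 1).factorial : ℝ)) •
      (p + (0 : ℝ) • (1 : Quaternion ℝ)) ^ (2 * l + 1) := by
    refine Summable.of_norm ?_
    have h := (Real.summable_pow_div_factorial ‖p‖).comp_injective
      (i := fun l : ℕ => 2 * l + 1) fun a b h => by simpa using h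
    refine h.congr fun l => ?_
    rw [zero_smul, add_zero, norm_smul, norm_pow, norm_div, norm_pow, norm_neg, norm_one, one_pow,
      Real.norm_natCast]
    simp only [Function.comp]
    ring
  have key := hasDerivAt_tsum_of_isPreconnected
    (g := fun (l : ℕ) (t : ℝ) => ((-1 : ℝ) ^ l / ((2 * l + 1).factorial : ℝ)) •
      (p + t • (1 : Quaternion ℝ)) ^ (2 * l + 1))
    (g' := fun (l : ℕ) (t : ℝ) => ((-1 : ℝ) ^ l / ((2 * l).factorial : ℝ)) •
      (p + t • (1 : Quaternion ℝ)) ^ (2 * l))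
    (t := Metric.ball (0 : ℝ) 1) (y₀ := 0) (y := 0) hu Metric.isOpen_ball
    (convex_ball (0 : ℝ) 1).isPreconnected ?_ ?_ (by simp) hs (by simp)
  · simpa using key
  · intro l t _
    refine ((hasDerivAt_shift_pow p (2 * l) t).const_smul
      ((-1 : ℝ) ^ l / ((2 * l + 1).factorial : ℝ))).congr_deriv ?_
    rw [smul_smul, Nat.factorial_succ]
    congr 1
    have h0 : ((2 * l).factorial : ℝ) ≠ 0 := by positivity
    have h1 : (2 * (l : ℝ) + 1) ≠ 0 := by positivity
    push_cast
    field_simp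
  · intro l t ht
    rw [norm_cos_coeff_smul]
    have hq : ‖p + t • (1 : Quaternion ℝ)‖ ≤ ‖p‖ + 1 := by
      refine (norm_add_le _ _).trans ?_
      rw [norm_smul, norm_one, mul_one]
      have := mem_ball_zero_iff.1 ht
      linarith
    gcongr
end

section
/- (Maclaurin series of sin p · cos p, Section 4.2) For every p ∈ ℍ, the quaternionic product of the sine and cosine series equals the series (sin p)(cos p) = ∑_{l=0}^∞ ((-1)^l 4^l/(2l+1)!) • p^{2l+1}, and this series converges absolutely for every p ∈ ℍ. Moreover the product commutes: (sin p)(cos p) = (cos p)(sin p). -/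
/-!
Powers of a single quaternion commute and both series converge absolutely (by comparison with the
real exponential series), so the product of the sums is the sum of the Cauchy product. Its `n`-th
term is `(-1)^n • p^(2n+1)` times `∑_{i+j=n} 1/((2i+1)! (2j)!)`, which equals `4^n/(2n+1)!` because
the binomial coefficients `C(2n+1, 2i+1)` sum to `2^(2n)`. Commutativity follows termwise.
-/

/-- The odd-indexed entries of row `2n+1` of Pascal's triangle: by Pascal's rule, their sum is the
sum of the whole row `2n`. -/
lemma sum_choose_odd (n : ℕ) :
    ∑ i ∈ Finset.range (n + 1), (2 * n + 1).choose (2 * i + 1) = 4 ^ n := by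
  have pair (f : ℕ → ℕ) (m : ℕ) :
      ∑ i ∈ Finset.range m, (f (2 * i) + f (2 * i + 1)) = ∑ k ∈ Finset.range (2 * m), f k := by
    induction m with
    | zero => simp
    | succ m ih =>
      rw [Finset.sum_range_succ, ih, show 2 * (m + 1) = 2 * m + 1 + 1 by ring,
        Finset.sum_range_succ, Finset.sum_range_succ, add_assoc]
  simp only [Nat.choose_succ_succ']
  rw [pair (fun k => (2 * n).choose k) (n + 1), show 2 * (n + 1) = 2 * n + 1 + 1 by ring,
    Finset.sum_range_succ, Nat.sum_range_choose, Nat.choose_succ_self, pow_mul]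
  norm_num

lemma sum_inv_factorial_mul (n : ℕ) :
    ∑ ij ∈ Finset.HasAntidiagonal.antidiagonal n,
        (1 : ℝ) / ((2 * ij.1 + 1).factorial * (2 * ij.2).factorial)
      = 4 ^ n / (2 * n + 1).factorial := by
  rw [Finset.Nat.sum_antidiagonal_eq_sum_range_succ
      (fun i j => (1 : ℝ) / ((2 * i + 1).factorial * (2 * j).factorial)),
    eq_div_iff (by positivity), Finset.sum_mul]
  have h := congrArg (Nat.cast : ℕ → ℝ) (sum_choose_odd n)
  push_cast at h
  rw [← h]
  refine Finset.sum_congr rfl fun i hi => ?_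
  have hi' : i ≤ n := Nat.lt_succ_iff.mp (Finset.mem_range.mp hi)
  rw [Nat.cast_choose ℝ (by omega : 2 * i + 1 ≤ 2 * n + 1),
    show 2 * n + 1 - (2 * i + 1) = 2 * (n - i) by omega, one_div_mul_eq_div]

/-- Comparison with the exponential series at `c * ‖p‖`, sampled along an injective sequence of
exponents. -/
lemma summable_norm_smul_pow (p : Quaternion ℝ) (c : ℝ) (a : ℕ → ℝ) (k : ℕ → ℕ)
    (hk : Function.Injective k) (ha : ∀ l, |a l| ≤ c ^ k l / (k l).factorial) :
    Summable fun l => ‖a l • p ^ k l‖ := by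
  refine Summable.of_nonneg_of_le (fun _ => norm_nonneg _) (fun l => ?_)
    ((Real.summable_pow_div_factorial (c * ‖p‖)).comp_injective hk)
  rw [norm_smul, norm_pow, Real.norm_eq_abs, Function.comp_apply, mul_pow, mul_div_right_comm]
  gcongr
  exact ha l


/-- (Maclaurin series of `sin p * cos p`, Section 4.2) For every quaternion `p`, the product
of the quaternionic sine and cosine series equals the series
`∑ ((-1)^l * 4^l / (2l+1)!) • p ^ (2l+1)`, this series converges absolutely, and the product
commutes: `sin p * cos p = cos p * sin p`. -/
theorem quaternion_sin_mul_cos_series (p : Quaternion ℝ) :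
    ((∑' l : ℕ, ((-1 : ℝ) ^ l / ((2 * l + 1).factorial : ℝ)) • p ^ (2 * l + 1)) *
        (∑' l : ℕ, ((-1 : ℝ) ^ l / ((2 * l).factorial : ℝ)) • p ^ (2 * l))
      = ∑' l : ℕ, ((-1 : ℝ) ^ l * 4 ^ l / ((2 * l + 1).factorial : ℝ)) • p ^ (2 * l + 1)) ∧
    Summable (fun l : ℕ =>
      ‖((-1 : ℝ) ^ l * 4 ^ l / ((2 * l + 1).factorial : ℝ)) • p ^ (2 * l + 1)‖) ∧
    ((∑' l : ℕ, ((-1 : ℝ) ^ l / ((2 * l + 1).factorial : ℝ)) • p ^ (2 * l + 1)) *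
        (∑' l : ℕ, ((-1 : ℝ) ^ l / ((2 * l).factorial : ℝ)) • p ^ (2 * l))
      = (∑' l : ℕ, ((-1 : ℝ) ^ l / ((2 * l).factorial : ℝ)) • p ^ (2 * l)) *
        (∑' l : ℕ, ((-1 : ℝ) ^ l / ((2 * l + 1).factorial : ℝ)) • p ^ (2 * l + 1))) := by
  have hodd : Function.Injective fun l : ℕ => 2 * l + 1 := fun a b h => by
    simpa using h
  have heven : Function.Injective fun l : ℕ => 2 * l := fun a b h => by
    simpa using h
  have hs := summable_norm_smul_pow p 1 (fun l => (-1) ^ l / ((2 * l + 1).factorial : ℝ))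
    _ hodd (fun l => by simp [abs_div])
  have hc := summable_norm_smul_pow p 1 (fun l => (-1) ^ l / ((2 * l).factorial : ℝ))
    _ heven (fun l => by simp [abs_div])
  refine ⟨?_, ?_, ?_⟩
  · rw [tsum_mul_tsum_eq_tsum_sum_antidiagonal_of_summable_norm hs hc]
    refine tsum_congr fun n => ?_
    rw [mul_div_assoc, ← sum_inv_factorial_mul, Finset.mul_sum, Finset.sum_smul]
    refine Finset.sum_congr rfl fun ij hij => ?_
    rw [← Finset.HasAntidiagonal.mem_antidiagonal.mp hij, smul_mul_smul_comm, ← pow_add, div_mul_div_comm,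
      ← pow_add, mul_one_div]
    congr 2
    ring
  · -- `4 ^ l ≤ 2 ^ (2 * l + 1)`, so the exponential series at `2 * ‖p‖` dominates.
    refine summable_norm_smul_pow p 2
      (fun l => (-1) ^ l * 4 ^ l / ((2 * l + 1).factorial : ℝ)) _ hodd (fun l => ?_)
    have h4 : (4 : ℝ) ^ l ≤ 2 ^ (2 * l + 1) := by
      rw [pow_succ, pow_mul]
      norm_num
    simp only [abs_div, abs_mul, abs_pow, abs_neg, abs_one, one_pow, one_mul, Nat.abs_cast,
      Nat.abs_ofNat]
    gcongr
  · exact Commute.tsum_left _ fun i => Commute.tsum_right _ fun j =>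
      ((Commute.pow_pow_self p _ _).smul_left _).smul_right _
end
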